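/- Let $\ell:(0,\infty)\to(0,\infty)$ be a (Lebesgue) measurable, locally bounded function that is slowly varying at infinity, that is, $\ell(ct)/\ell(t)\to 1$ as $t\to\infty$ for every $c>0$. Let $q$ be a positive function, defined in a neighborhood of infinity, with $q(t)\to\infty$ and $q(t)/t\to 0$ as $t\to\infty$, and fix constants $a, A$ with $0<a<1<A$. Then $$\int_{a q(t)}^{A q(t)} y^{q(t)-1} e^{-y}\,\ell(t/y)\,dy \;\sim\; \ell(t/q(t)) \int_{a q(t)}^{A q(t)} y^{q(t)-1} e^{-y}\,dy,\qquad t\to\infty,$$ where $f(t)\sim g(t)$ as $t\to\infty$ means $f(t)/g(t)\to 1$. -/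

import Mathlib

open MeasureTheory Set Filter Topology

/-- `ℓ : (0,∞) → (0,∞)` is slowly varying at infinity: it is positive and Lebesgue measurable on
`(0,∞)`, and `ℓ (c t) / ℓ t → 1` as `t → ∞` for every `c > 0`. Only the values of `ℓ` on `(0,∞)`
matter. -/
structure SlowlyVaryingAtTop (ℓ : ℝ → ℝ) : Prop where
  pos : ∀ x : ℝ, 0 < x → 0 < ℓ x
  aemeasurable : AEMeasurable ℓ (volume.restrict (Ioi 0))
  tendsto : ∀ c : ℝ, 0 < c → Tendsto (fun t => ℓ (c * t) / ℓ t) atTop (𝓝 1)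

/-- `ℓ` is locally bounded on `(0,∞)`: bounded on every compact subinterval of `(0,∞)`. -/
def LocallyBoundedOnIoi (ℓ : ℝ → ℝ) : Prop :=
  ∀ u v : ℝ, 0 < u → ∃ M : ℝ, ∀ x ∈ Icc u v, |ℓ x| ≤ M

/-- The class `𝒬` of positive functions `q`, defined in a neighbourhood of infinity, with
`q t → ∞` and `q t / t → 0` as `t → ∞`. Only the values of `q` near infinity matter. -/
structure ClassQ (q : ℝ → ℝ) : Prop where
  eventually_pos : ∀ᶠ t in atTop, 0 < q t
  tendsto_atTop : Tendsto q atTop atTop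
  tendsto_div : Tendsto (fun t => q t / t) atTop (𝓝 0)

/-!
On the range of integration `q t / y` stays in the compact interval `[1 / A, 1 / a]` of `(0, ∞)`.
Since `t / q t → ∞`, the value `ℓ (t / y) = ℓ ((q t / y) * (t / q t))` is therefore uniformly close,
in ratio, to `ℓ (t / q t)`, and a weighted average of `ℓ (t / y) / ℓ (t / q t)` tends to `1`.

The uniformity is the uniform convergence theorem for slowly varying functions. With
`h = log ∘ ℓ ∘ exp`, truncate the increments `h (x + u) - h x` so that dominated convergence
applies; the truncated increment from `x` to `x + u` is bounded by the sum of those from `x + u` and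
from `x` to a common point `x + u + w`, and averaging over `w ∈ [0, 1]` bounds it by integrals that
tend to `0`.
-/

section QuasiMeasurePreserving

variable {E : Type*} [NormedAddCommGroup E] [NormedSpace ℝ E] [FiniteDimensional ℝ E]
  [MeasurableSpace E] [BorelSpace E] {μ : Measure E} [μ.IsAddHaarMeasure] {f g : E → E}
  {s t : Set E}

theorem quasiMeasurePreserving_restrict_of_differentiableOn_leftInvOn (hf : Measurable f)
    (hst : MapsTo f s t) (hg : DifferentiableOn ℝ g t) (hgf : LeftInvOn g f s) :
    Measure.QuasiMeasurePreserving f (μ.restrict s) (μ.restrict t) := by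
  refine ⟨hf, Measure.AbsolutelyContinuous.mk fun n hn hn0 => ?_⟩
  rw [Measure.restrict_apply hn] at hn0
  rw [Measure.map_apply hf hn, Measure.restrict_apply (hf hn)]
  refine measure_mono_null ?_ (addHaar_image_eq_zero_of_differentiableOn_of_addHaar_eq_zero μ
    (hg.mono inter_subset_right) hn0)
  rintro x ⟨hxn, hxs⟩
  exact ⟨f x, ⟨hxn, hst hxs⟩, hgf hxs⟩

end QuasiMeasurePreserving

section UniformConvergence

variable {X : Type*} [PseudoMetricSpace X] {h : ℝ → X}

/-- The distance from `h x` to `h (x + v)`, truncated at `1` so that it is integrable in `v` over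
bounded intervals for every measurable `h`. -/
noncomputable def truncatedIncrement (h : ℝ → X) (x v : ℝ) : ℝ := min 1 (dist (h (x + v)) (h x))

theorem truncatedIncrement_nonneg (h : ℝ → X) (x v : ℝ) : 0 ≤ truncatedIncrement h x v :=
  le_min zero_le_one dist_nonneg

theorem norm_truncatedIncrement_le_one (h : ℝ → X) (x v : ℝ) : ‖truncatedIncrement h x v‖ ≤ 1 := by
  rw [Real.norm_of_nonneg (truncatedIncrement_nonneg h x v)]
  exact min_le_left _ _

theorem truncatedIncrement_le_add (h : ℝ → X) (x u w : ℝ) :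
    truncatedIncrement h x u ≤
      truncatedIncrement h (x + u) w + truncatedIncrement h x (u + w) := by
  unfold truncatedIncrement
  rw [← add_assoc]
  have := dist_triangle_left (h (x + u)) (h x) (h (x + u + w))
  grind [dist_nonneg (x := h (x + u + w)) (y := h (x + u)),
    dist_nonneg (x := h (x + u + w)) (y := h x)]

theorem aestronglyMeasurable_truncatedIncrement (hh : AEStronglyMeasurable h) (x : ℝ) :
    AEStronglyMeasurable (truncatedIncrement h x) := by
  have hshift : AEStronglyMeasurable (fun v => h (x + v)) :=
    hh.comp_quasiMeasurePreserving (measurePreserving_add_left volume x).quasiMeasurePreserving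
  exact aestronglyMeasurable_const.inf (hshift.dist aestronglyMeasurable_const)

theorem intervalIntegrable_truncatedIncrement (hh : AEStronglyMeasurable h) (x a b : ℝ) :
    IntervalIntegrable (truncatedIncrement h x) volume a b :=
  (intervalIntegrable_const (c := (1 : ℝ))).mono_fun
    (aestronglyMeasurable_truncatedIncrement hh x).restrict
    (ae_of_all _ fun v => by simpa using norm_truncatedIncrement_le_one h x v)

theorem tendsto_integral_truncatedIncrement (hh : AEStronglyMeasurable h)
    (hlim : ∀ v, Tendsto (fun x => dist (h (x + v)) (h x)) atTop (𝓝 0)) (a b : ℝ) :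
    Tendsto (fun x => ∫ v in a..b, truncatedIncrement h x v) atTop (𝓝 0) := by
  have hpointwise (v : ℝ) : Tendsto (fun x => truncatedIncrement h x v) atTop (𝓝 0) := by
    simpa [truncatedIncrement] using (tendsto_const_nhds (x := (1 : ℝ))).min (hlim v)
  simpa using intervalIntegral.tendsto_integral_filter_of_dominated_convergence (μ := volume)
    (fun _ => (1 : ℝ))
    (.of_forall fun x => (aestronglyMeasurable_truncatedIncrement hh x).restrict)
    (.of_forall fun x => ae_of_all _ fun v _ => norm_truncatedIncrement_le_one h x v)
    intervalIntegrable_const (ae_of_all _ fun v _ => hpointwise v)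

theorem truncatedIncrement_le_integral_add_integral (hh : AEStronglyMeasurable h) {α β u : ℝ}
    (hu : u ∈ Icc α β) (x : ℝ) :
    truncatedIncrement h x u ≤ (∫ w in (0 : ℝ)..1, truncatedIncrement h (x + u) w) +
      ∫ v in α..(β + 1), truncatedIncrement h x v := by
  have hint := intervalIntegrable_truncatedIncrement hh
  have hint_shift : IntervalIntegrable (fun w => truncatedIncrement h x (u + w)) volume 0 1 := by
    simpa using (hint x (u + 0) (u + 1)).comp_add_left (c := u)
  calc truncatedIncrement h x u
      = ∫ _ in (0 : ℝ)..1, truncatedIncrement h x u := by simp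
    _ ≤ ∫ w in (0 : ℝ)..1, (truncatedIncrement h (x + u) w + truncatedIncrement h x (u + w)) :=
        intervalIntegral.integral_mono_on zero_le_one intervalIntegrable_const
          ((hint (x + u) 0 1).add hint_shift) fun w _ => truncatedIncrement_le_add h x u w
    _ = (∫ w in (0 : ℝ)..1, truncatedIncrement h (x + u) w) +
          ∫ v in u..(u + 1), truncatedIncrement h x v := by
        rw [intervalIntegral.integral_add (hint _ _ _) hint_shift,
          intervalIntegral.integral_comp_add_left (truncatedIncrement h x), add_zero]
    _ ≤ (∫ w in (0 : ℝ)..1, truncatedIncrement h (x + u) w) +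
          ∫ v in α..(β + 1), truncatedIncrement h x v := by
        gcongr
        exact intervalIntegral.integral_mono_interval hu.1 (by linarith) (by linarith [hu.2])
          (ae_of_all _ (truncatedIncrement_nonneg h x)) (hint _ _ _)

theorem tendstoUniformlyOn_dist_add_of_tendsto (hh : AEStronglyMeasurable h)
    (hlim : ∀ v, Tendsto (fun x => dist (h (x + v)) (h x)) atTop (𝓝 0)) (α β : ℝ) :
    TendstoUniformlyOn (fun x u => dist (h (x + u)) (h x)) (fun _ => 0) atTop (Icc α β) := by
  refine Metric.tendstoUniformlyOn_iff.2 fun ε hε => ?_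
  have hhalf : 0 < min 1 ε / 2 := by positivity
  obtain ⟨x₀, hx₀⟩ := eventually_atTop.1
    ((tendsto_integral_truncatedIncrement hh hlim 0 1).eventually_lt_const hhalf)
  filter_upwards [(tendsto_integral_truncatedIncrement hh hlim α (β + 1)).eventually_lt_const hhalf,
    eventually_ge_atTop (x₀ - α)] with x hx hx₀x u hu
  have htrunc : truncatedIncrement h x u < min 1 ε := by
    linarith [truncatedIncrement_le_integral_add_integral hh hu x, hx₀ (x + u) (by linarith [hu.1])]
  have hdist : dist (h (x + u)) (h x) < ε :=
    lt_of_not_ge fun hle => htrunc.not_ge (min_le_min_left 1 hle)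
  simpa using hdist

end UniformConvergence

theorem abs_integral_mul_div_integral_sub_le {α : Type*} [MeasurableSpace α] {μ : Measure α}
    {w g : α → ℝ} {c ε : ℝ} (hw : Integrable w μ) (hw_nonneg : 0 ≤ᵐ[μ] w)
    (hw_pos : 0 < ∫ y, w y ∂μ) (hg : AEStronglyMeasurable g μ)
    (hgc : ∀ᵐ y ∂μ, |g y - c| ≤ ε) :
    |(∫ y, w y * g y ∂μ) / (∫ y, w y ∂μ) - c| ≤ ε := by
  have hdiff : Integrable (fun y => w y * (g y - c)) μ :=
    hw.mul_bdd (hg.sub aestronglyMeasurable_const) hgc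
  have hsub : (∫ y, w y * g y ∂μ) - (∫ y, w y ∂μ) * c = ∫ y, w y * (g y - c) ∂μ := by
    rw [sub_eq_iff_eq_add, ← integral_mul_const c, ← integral_add hdiff (hw.mul_const c)]
    exact integral_congr_ae (.of_forall fun y => by ring)
  have hbound : ‖∫ y, w y * (g y - c) ∂μ‖ ≤ ∫ y, ε * w y ∂μ := by
    refine norm_integral_le_of_norm_le (hw.const_mul ε) ?_
    filter_upwards [hw_nonneg, hgc] with y hwy hgy
    rw [norm_mul, Real.norm_of_nonneg hwy, mul_comm]
    exact mul_le_mul_of_nonneg_right hgy hwy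
  rw [div_sub' hw_pos.ne', abs_div, abs_of_pos hw_pos, div_le_iff₀ hw_pos, hsub,
    ← integral_const_mul]
  exact hbound

theorem tendsto_div_atTop_of_tendsto_div_nhds_zero {ι : Type*} {l : Filter ι} {f g : ι → ℝ}
    (hf : ∀ᶠ i in l, 0 < f i) (hg : ∀ᶠ i in l, 0 < g i)
    (hfg : Tendsto (fun i => f i / g i) l (𝓝 0)) : Tendsto (fun i => g i / f i) l atTop := by
  have hfg' : Tendsto (fun i => f i / g i) l (𝓝[>] 0) :=
    tendsto_nhdsWithin_iff.2 ⟨hfg, by filter_upwards [hf, hg] with i hfi hgi using div_pos hfi hgi⟩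
  exact hfg'.inv_tendsto_nhdsGT_zero.congr fun i => inv_div _ _

namespace SlowlyVaryingAtTop

variable {ℓ q : ℝ → ℝ} {a A : ℝ}

theorem aemeasurable_log_comp_exp (hℓ : SlowlyVaryingAtTop ℓ) :
    AEMeasurable fun x => Real.log (ℓ (Real.exp x)) := by
  have hexp : Measure.QuasiMeasurePreserving Real.exp volume (volume.restrict (Ioi 0)) := by
    simpa using quasiMeasurePreserving_restrict_of_differentiableOn_leftInvOn (μ := volume)
      (s := univ) (t := Ioi 0) Real.measurable_exp (fun x _ => Real.exp_pos x)
      (Real.differentiableOn_log.mono fun x hx => ne_of_gt hx) (fun x _ => Real.log_exp x)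
  exact Real.measurable_log.comp_aemeasurable (hℓ.aemeasurable.comp_quasiMeasurePreserving hexp)

theorem aemeasurable_comp_const_div (hℓ : SlowlyVaryingAtTop ℓ) {t : ℝ} (ht : 0 < t) :
    AEMeasurable (fun y => ℓ (t / y)) (volume.restrict (Ioi 0)) :=
  hℓ.aemeasurable.comp_quasiMeasurePreserving <|
    quasiMeasurePreserving_restrict_of_differentiableOn_leftInvOn (g := fun z => t / z)
    (measurable_const.div measurable_id) (fun _ hy => div_pos ht hy)
    ((differentiableOn_const t).div differentiableOn_id fun _ hz => ne_of_gt hz)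
    (fun _ _ => div_div_cancel₀ ht.ne')

theorem log_div_eq_log_comp_exp_sub (hℓ : SlowlyVaryingAtTop ℓ) {c s : ℝ} (hc : 0 < c)
    (hs : 0 < s) :
    Real.log (ℓ (c * s) / ℓ s) =
      Real.log (ℓ (Real.exp (Real.log s + Real.log c))) -
        Real.log (ℓ (Real.exp (Real.log s))) := by
  rw [Real.exp_add, Real.exp_log hs, Real.exp_log hc, mul_comm s c,
    Real.log_div (hℓ.pos _ (mul_pos hc hs)).ne' (hℓ.pos _ hs).ne']

theorem tendsto_log_comp_exp_sub (hℓ : SlowlyVaryingAtTop ℓ) (v : ℝ) :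
    Tendsto (fun x => Real.log (ℓ (Real.exp (x + v))) - Real.log (ℓ (Real.exp x))) atTop
      (𝓝 0) := by
  have hlog := ((hℓ.tendsto _ (Real.exp_pos v)).comp Real.tendsto_exp_atTop).log one_ne_zero
  rw [Real.log_one] at hlog
  refine hlog.congr fun x => ?_
  simpa using hℓ.log_div_eq_log_comp_exp_sub (Real.exp_pos v) (Real.exp_pos x)

theorem tendstoUniformlyOn_log (hℓ : SlowlyVaryingAtTop ℓ) {b : ℝ} (hb : 0 < b) (B : ℝ) :
    TendstoUniformlyOn (fun s c => Real.log (ℓ (c * s) / ℓ s)) (fun _ => 0) atTop (Icc b B) := by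
  have hadditive := tendstoUniformlyOn_dist_add_of_tendsto
    hℓ.aemeasurable_log_comp_exp.aestronglyMeasurable
    (fun v => tendsto_zero_iff_norm_tendsto_zero.1 (hℓ.tendsto_log_comp_exp_sub v))
    (Real.log b) (Real.log B)
  rw [Metric.tendstoUniformlyOn_iff] at hadditive ⊢
  intro ε hε
  filter_upwards [Real.tendsto_log_atTop.eventually (hadditive ε hε),
    eventually_gt_atTop 0] with s hs hs0 c hc
  have hc0 : 0 < c := hb.trans_le hc.1
  have hdist := hs (Real.log c) ⟨Real.log_le_log hb hc.1, Real.log_le_log hc0 hc.2⟩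
  rw [hℓ.log_div_eq_log_comp_exp_sub hc0 hs0]
  simpa [Real.dist_eq, abs_sub_comm] using hdist

theorem tendstoUniformlyOn (hℓ : SlowlyVaryingAtTop ℓ) {b : ℝ} (hb : 0 < b) (B : ℝ) :
    TendstoUniformlyOn (fun s c => ℓ (c * s) / ℓ s) (fun _ => 1) atTop (Icc b B) := by
  rw [← tendsto_prod_principal_iff]
  have hexp := (Real.continuous_exp.tendsto 0).comp
    (tendsto_prod_principal_iff.2 (hℓ.tendstoUniformlyOn_log hb B))
  rw [Real.exp_zero] at hexp
  refine hexp.congr' ?_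
  filter_upwards [prod_mem_prod (Ioi_mem_atTop 0) (mem_principal_self (Icc b B))]
    with ⟨s, c⟩ ⟨hs, hc⟩
  exact Real.exp_log (div_pos (hℓ.pos _ (mul_pos (hb.trans_le hc.1) hs)) (hℓ.pos _ hs))

theorem eventually_abs_comp_div_sub_one_lt (hℓ : SlowlyVaryingAtTop ℓ)
    (hq_pos : ∀ᶠ t in atTop, 0 < q t) (hdiv_q : Tendsto (fun t => t / q t) atTop atTop)
    (ha : 0 < a) (hA : 0 < A) {ε : ℝ} (hε : 0 < ε) :
    ∀ᶠ t in atTop, ∀ y ∈ Icc (a * q t) (A * q t), |ℓ (t / y) / ℓ (t / q t) - 1| < ε := by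
  have hunif := Metric.tendstoUniformlyOn_iff.1 (hℓ.tendstoUniformlyOn (inv_pos.2 hA) a⁻¹) ε hε
  filter_upwards [hdiv_q.eventually hunif, hq_pos] with t ht hqt y hy
  have hy0 : 0 < y := (mul_pos ha hqt).trans_le hy.1
  have hmem : q t / y ∈ Icc A⁻¹ a⁻¹ :=
    ⟨by rw [le_div_iff₀ hy0, inv_mul_le_iff₀ hA]; exact hy.2,
      by rw [div_le_iff₀ hy0, le_inv_mul_iff₀ ha]; exact hy.1⟩
  have hsplit : q t / y * (t / q t) = t / y := by field_simp
  simpa [hsplit, dist_comm, Real.dist_eq] using ht _ hmem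

theorem tendsto_integral_mul_comp_div (hℓ : SlowlyVaryingAtTop ℓ)
    (hq_pos : ∀ᶠ t in atTop, 0 < q t) (hdiv_q : Tendsto (fun t => t / q t) atTop atTop)
    (ha : 0 < a) (haA : a ≤ A) {w : ℝ → ℝ → ℝ}
    (hw : ∀ᶠ t in atTop, IntervalIntegrable (w t) volume (a * q t) (A * q t))
    (hw_nonneg : ∀ᶠ t in atTop, ∀ y ∈ Ioc (a * q t) (A * q t), 0 ≤ w t y)
    (hw_pos : ∀ᶠ t in atTop, 0 < ∫ y in (a * q t)..(A * q t), w t y) :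
    Tendsto (fun t => (∫ y in (a * q t)..(A * q t), w t y * ℓ (t / y)) /
      (ℓ (t / q t) * ∫ y in (a * q t)..(A * q t), w t y)) atTop (𝓝 1) := by
  refine Metric.tendsto_nhds.2 fun ε hε => ?_
  filter_upwards [hℓ.eventually_abs_comp_div_sub_one_lt hq_pos hdiv_q ha (ha.trans_le haA)
    (half_pos hε), hq_pos, eventually_gt_atTop 0, hw, hw_nonneg, hw_pos]
    with t hclose hqt ht hwt hwt_nonneg hwt_pos
  have hle : a * q t ≤ A * q t := by gcongr
  have hsubset : Ioc (a * q t) (A * q t) ⊆ Ioi 0 := fun y hy => (mul_pos ha hqt).trans hy.1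
  have hmeas : AEStronglyMeasurable (fun y => ℓ (t / y) / ℓ (t / q t))
      (volume.restrict (Ioc (a * q t) (A * q t))) :=
    (((hℓ.aemeasurable_comp_const_div ht).mono_set hsubset).div_const _).aestronglyMeasurable
  simp only [intervalIntegral.integral_of_le hle] at hwt_pos ⊢
  have haverage := abs_integral_mul_div_integral_sub_le hwt.1
    (ae_restrict_of_forall_mem measurableSet_Ioc hwt_nonneg) hwt_pos hmeas
    (ae_restrict_of_forall_mem measurableSet_Ioc fun y hy => (hclose y (Ioc_subset_Icc_self hy)).le)
  simp only [← mul_div_assoc, integral_div, div_div] at haverage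
  exact haverage.trans_lt (half_lt_self hε)

end SlowlyVaryingAtTop

theorem intervalIntegrable_rpow_mul_exp_neg (r : ℝ) {u v : ℝ} (hu : 0 < u) (hv : 0 < v) :
    IntervalIntegrable (fun y => y ^ r * Real.exp (-y)) volume u v := by
  refine ContinuousOn.intervalIntegrable (ContinuousOn.mul ?_ (by fun_prop))
  exact continuousOn_id.rpow_const fun y hy => .inl ((lt_min hu hv).trans_le hy.1).ne'

theorem integral_rpow_mul_exp_neg_pos (r : ℝ) {u v : ℝ} (hu : 0 < u) (huv : u < v) :
    0 < ∫ y in u..v, y ^ r * Real.exp (-y) :=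
  intervalIntegral.intervalIntegral_pos_of_pos_on
    (intervalIntegrable_rpow_mul_exp_neg r hu (hu.trans huv))
    (fun _ hy => mul_pos (Real.rpow_pos_of_pos (hu.trans hy.1) r) (Real.exp_pos _)) huv

theorem stmt_11_general {ℓ q : ℝ → ℝ} {a A : ℝ} (hℓ : SlowlyVaryingAtTop ℓ)
    (hq_pos : ∀ᶠ t in atTop, 0 < q t) (hq_div : Tendsto (fun t => q t / t) atTop (𝓝 0))
    (ha : 0 < a) (haA : a < A) :
    Tendsto (fun t : ℝ =>
      (∫ y in (a * q t)..(A * q t), y ^ (q t - 1) * Real.exp (-y) * ℓ (t / y)) /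
        (ℓ (t / q t) * ∫ y in (a * q t)..(A * q t), y ^ (q t - 1) * Real.exp (-y)))
      atTop (𝓝 1) := by
  refine hℓ.tendsto_integral_mul_comp_div hq_pos
    (tendsto_div_atTop_of_tendsto_div_nhds_zero hq_pos (eventually_gt_atTop 0) hq_div) ha haA.le
    (w := fun t y => y ^ (q t - 1) * Real.exp (-y)) ?integrable ?nonneg ?pos
  case integrable =>
    filter_upwards [hq_pos] with t hqt using
      intervalIntegrable_rpow_mul_exp_neg _ (mul_pos ha hqt) (mul_pos (ha.trans haA) hqt)
  case nonneg =>
    filter_upwards [hq_pos] with t hqt y hy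
    have hy0 : 0 < y := (mul_pos ha hqt).trans hy.1
    positivity
  case pos =>
    filter_upwards [hq_pos] with t hqt using
      integral_rpow_mul_exp_neg_pos _ (mul_pos ha hqt) (by gcongr)

theorem stmt_11 (ℓ : ℝ → ℝ) (hℓ : SlowlyVaryingAtTop ℓ) (hℓb : LocallyBoundedOnIoi ℓ)
    (q : ℝ → ℝ) (hq : ClassQ q) (a A : ℝ) (ha : 0 < a) (ha1 : a < 1) (hA : 1 < A) :
    Tendsto (fun t : ℝ =>
      (∫ y in (a * q t)..(A * q t), y ^ (q t - 1) * Real.exp (-y) * ℓ (t / y)) /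
        (ℓ (t / q t) * ∫ y in (a * q t)..(A * q t), y ^ (q t - 1) * Real.exp (-y)))
      atTop (𝓝 1) :=
  stmt_11_general hℓ hq.eventually_pos hq.tendsto_div ha (ha1.trans hA)
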